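/- Let A_q be the set of functions f : ℝ^q × [0,1] → ℂ that are C^∞ on ℝ^q × [0,1] (in the sense of ContDiffOn, derivatives one-sided in t at t = 0, 1), for which there exists a compact set K ⊆ ℝ^q × [0,1] with K ∩ (ℝ^q × {0}) ⊆ {(0,0)} such that f(ξ,t) = 0 whenever t ≠ 0 and (tξ, t) ∉ K, and such that for all k, m ∈ ℕ and α ∈ ℕ^q there is C > 0 with (1 + ‖ξ‖²)^k · |∂_ξ^α ∂_t^m f(ξ,t)| ≤ C on ℝ^q × [0,1]. Then for all f, g ∈ A_q the function (f ⋆ g)(ξ,t) = ∫_{ℝ^q} f(ξ−η, t)·g(η, t) dη is well defined and belongs to A_q. -/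

import Mathlib

/-!
Everything reduces to the Leibniz rule for the fibrewise convolution. A function in `A_q` is smooth
up to the boundary, so its second derivatives are symmetric there as well (`amder_comm`); hence the
decay of the ordered mixed partials `amixed α m f` gives the decay of the partial derivatives taken
in any order (`MemA.sch`, via `perm_multiList`). This defines a class `Sch` of rapidly decreasing
functions that is stable under each coordinate derivative.

For `f, g` in `Sch`, the integrand `f (ξ - η, t) * g (η, t)` and its derivative in `(ξ, t)` are
dominated by a multiple of `(1 + ‖η‖²)^(-(q+1))`, uniformly in `(ξ, t)`. As `ℝ^q × [0,1]` is convex,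
the mean value inequality and dominated convergence allow one to differentiate under the integral
sign up to the boundary (`hasFDerivWithinAt_integral_of_convex`), so that
`∂_{ξ_j} (f ⋆ g) = (∂_{ξ_j} f) ⋆ g` and `∂_t (f ⋆ g) = (∂_t f) ⋆ g + f ⋆ (∂_t g)` (`amder_aconv`).
The right-hand sides are again sums of convolutions of functions in `Sch`. Induction on the order of
differentiation then gives smoothness (`aconv_contDiffOn`), and, starting from the decay of `f ⋆ g`
itself, which is Peetre's inequality (`aconv_bound`), the decay of all derivatives
(`aconv_listDer_bound`). The supports add up fibrewise over `t` (`aconv_support`).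
-/

open Set MeasureTheory

noncomputable section

/-- Points of `ℝ^q × [0,1]` (the interval condition is imposed via the set `ADom`). -/
abbrev APt (q : ℕ) := (Fin q → ℝ) × ℝ

/-- The domain `ℝ^q × [0,1]`. -/
def ADom (q : ℕ) : Set (APt q) := {z | z.2 ∈ Icc (0 : ℝ) 1}

/-- Directional derivative within `ℝ^q × [0,1]`, as an operator on functions. -/
def amder {q : ℕ} (v : APt q) (g : APt q → ℂ) : APt q → ℂ :=
  fun z => fderivWithin ℝ g (ADom q) z v

/-- The mixed partial derivative `∂_ξ^α ∂_t^m g` taken within `ℝ^q × [0,1]`. -/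
def amixed {q : ℕ} (α : Fin q → ℕ) (m : ℕ) (g : APt q → ℂ) : APt q → ℂ :=
  (List.ofFn fun j : Fin q => (amder ((Pi.single j 1 : Fin q → ℝ), 0))^[α j]).foldr (· ∘ ·) id <|
    (amder (0, 1))^[m] g

/-- `f ∈ A_q = S_{r,c}(𝒢^T)` for the group `𝒢 = ℝ^q` in global rescaled coordinates:
`f` is `C^∞` on `ℝ^q × [0,1]` (one-sided derivatives in `t` at the boundary), there
is a compact `K ⊆ ℝ^q × [0,1]` with `K ∩ (ℝ^q × {0}) ⊆ {(0,0)}` such that `f(ξ,t) = 0`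
whenever `t ≠ 0` and `(tξ,t) ∉ K`, and all derivatives `∂_ξ^α ∂_t^m f` are dominated by
arbitrary negative powers of `1 + ‖ξ‖²`. -/
def MemA {q : ℕ} (f : APt q → ℂ) : Prop :=
  ContDiffOn ℝ (⊤ : ℕ∞) f (ADom q) ∧
  (∃ K : Set (APt q), IsCompact K ∧ (∀ z ∈ K, z.2 ∈ Icc (0 : ℝ) 1) ∧
    (∀ z ∈ K, z.2 = 0 → z.1 = 0) ∧
    ∀ (ξ : Fin q → ℝ) (t : ℝ), t ∈ Icc (0 : ℝ) 1 → t ≠ 0 → (t • ξ, t) ∉ K → f (ξ, t) = 0) ∧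
  ∀ (k m : ℕ) (α : Fin q → ℕ), ∃ C > 0, ∀ z ∈ ADom q,
    (1 + ‖z.1‖ ^ 2) ^ k * ‖amixed α m f z‖ ≤ C

/-- The fibrewise convolution `(f ⋆ g)(ξ,t) = ∫_{ℝ^q} f(ξ−η,t)·g(η,t) dη`. -/
noncomputable def aconv {q : ℕ} (f g : APt q → ℂ) : APt q → ℂ :=
  fun z => ∫ η : Fin q → ℝ, f (z.1 - η, z.2) * g (η, z.2)

open Filter Topology

variable {q : ℕ}

/-! ### The domain and its directional derivatives -/

lemma ADom_eq : ADom q = univ ×ˢ Icc (0 : ℝ) 1 := by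
  ext z; simp [ADom]

lemma convex_ADom : Convex ℝ (ADom q) := by
  rw [ADom_eq]; exact convex_univ.prod (convex_Icc 0 1)

lemma interior_ADom : interior (ADom q) = univ ×ˢ Ioo (0 : ℝ) 1 := by
  rw [ADom_eq, interior_prod_eq, interior_univ, interior_Icc]

lemma uniqueDiffOn_ADom : UniqueDiffOn ℝ (ADom q) := by
  rw [ADom_eq]
  exact uniqueDiffOn_univ.prod (uniqueDiffOn_Icc zero_lt_one)

lemma mem_closure_interior {z : APt q} (hz : z ∈ ADom q) : z ∈ closure (interior (ADom q)) := by
  rw [interior_ADom, closure_prod_eq, closure_univ, closure_Ioo zero_ne_one]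
  exact ⟨mem_univ _, hz⟩

lemma amder_contDiffOn {h : APt q → ℂ} (hh : ContDiffOn ℝ (⊤ : ℕ∞) h (ADom q)) (v : APt q) :
    ContDiffOn ℝ (⊤ : ℕ∞) (amder v h) (ADom q) :=
  (hh.fderivWithin uniqueDiffOn_ADom (by simp)).clm_apply contDiffOn_const

lemma amder_congr {h₁ h₂ : APt q → ℂ} (v : APt q) (h : EqOn h₁ h₂ (ADom q)) :
    EqOn (amder v h₁) (amder v h₂) (ADom q) := fun z hz => by
  simp only [amder, fderivWithin_congr h (h hz)]

lemma amder_add {h₁ h₂ : APt q → ℂ} (v : APt q) (d₁ : ContDiffOn ℝ (⊤ : ℕ∞) h₁ (ADom q))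
    (d₂ : ContDiffOn ℝ (⊤ : ℕ∞) h₂ (ADom q)) :
    EqOn (amder v (h₁ + h₂)) (amder v h₁ + amder v h₂) (ADom q) := fun z hz => by
  have := fderivWithin_add (uniqueDiffOn_ADom z hz)
    ((d₁ z hz).differentiableWithinAt (by simp)) ((d₂ z hz).differentiableWithinAt (by simp))
  simp [amder, this]

/-- Symmetry of second derivatives, valid up to the boundary of `ℝ^q × [0,1]`. -/
lemma amder_comm {h : APt q → ℂ} (hh : ContDiffOn ℝ (⊤ : ℕ∞) h (ADom q)) (v w : APt q) :
    EqOn (amder v (amder w h)) (amder w (amder v h)) (ADom q) := fun z hz => by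
  have key : ∀ v w : APt q, amder v (amder w h) z =
      fderivWithin ℝ (fderivWithin ℝ h (ADom q)) (ADom q) z v w := fun v w => by
    have d : DifferentiableWithinAt ℝ (fderivWithin ℝ h (ADom q)) (ADom q) z :=
      ((hh.fderivWithin (m := (⊤ : ℕ∞)) uniqueDiffOn_ADom (by simp)) z hz).differentiableWithinAt
        (by simp)
    have := (d.hasFDerivWithinAt.clm_apply (hasFDerivWithinAt_const w z (ADom q))).fderivWithin
      (uniqueDiffOn_ADom z hz)
    change fderivWithin ℝ (fun y => fderivWithin ℝ h (ADom q) y w) (ADom q) z v = _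
    rw [this]; simp
  rw [key, key]
  exact (hh z hz).isSymmSndFDerivWithinAt (by simp; exact WithTop.coe_le_coe.2 le_top)
    uniqueDiffOn_ADom (mem_closure_interior hz) hz v w

/-! ### Iterated partial derivatives in arbitrary order -/

/-- The coordinate directions of `ℝ^q × [0,1]`: `none` is the direction of `t`, and `some j` is
the direction of `ξ_j`. -/
def bvec : Option (Fin q) → APt q
  | none => (0, 1)
  | some j => (Pi.single j 1, 0)

/-- The iterated partial derivative of `f` along a list of coordinate directions. -/
def listDer (L : List (Option (Fin q))) (f : APt q → ℂ) : APt q → ℂ :=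
  L.foldr (fun i h => amder (bvec i) h) f

lemma listDer_cons (i : Option (Fin q)) (L : List (Option (Fin q))) (f : APt q → ℂ) :
    listDer (i :: L) f = amder (bvec i) (listDer L f) := rfl

lemma listDer_append (L L' : List (Option (Fin q))) (f : APt q → ℂ) :
    listDer (L ++ L') f = listDer L (listDer L' f) := by
  simp [listDer]

lemma listDer_contDiffOn {f : APt q → ℂ} (hf : ContDiffOn ℝ (⊤ : ℕ∞) f (ADom q))
    (L : List (Option (Fin q))) : ContDiffOn ℝ (⊤ : ℕ∞) (listDer L f) (ADom q) := by
  induction L with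
  | nil => exact hf
  | cons i L ih => exact amder_contDiffOn ih _

lemma listDer_congr {f g : APt q → ℂ} (h : EqOn f g (ADom q)) (L : List (Option (Fin q))) :
    EqOn (listDer L f) (listDer L g) (ADom q) := by
  induction L with
  | nil => exact h
  | cons i L ih => exact amder_congr _ ih

lemma listDer_add {f g : APt q → ℂ} (hf : ContDiffOn ℝ (⊤ : ℕ∞) f (ADom q))
    (hg : ContDiffOn ℝ (⊤ : ℕ∞) g (ADom q)) (L : List (Option (Fin q))) :
    EqOn (listDer L (f + g)) (listDer L f + listDer L g) (ADom q) := by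
  induction L with
  | nil => exact fun z _ => rfl
  | cons i L ih =>
    exact (amder_congr _ ih).trans (amder_add _ (listDer_contDiffOn hf L) (listDer_contDiffOn hg L))

lemma listDer_zero (L : List (Option (Fin q))) : listDer L (0 : APt q → ℂ) = 0 := by
  induction L with
  | nil => rfl
  | cons i L ih => rw [listDer_cons, ih]; funext z; simp [amder]

lemma listDer_perm {f : APt q → ℂ} (hf : ContDiffOn ℝ (⊤ : ℕ∞) f (ADom q))
    {L L' : List (Option (Fin q))} (h : L.Perm L') :
    EqOn (listDer L f) (listDer L' f) (ADom q) := by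
  induction h with
  | nil => exact fun z _ => rfl
  | cons i _ ih => exact amder_congr _ ih
  | swap i j L => exact amder_comm (listDer_contDiffOn hf L) _ _
  | trans _ _ h₁ h₂ => exact h₁.trans h₂

/-- The list of directions in which `amixed α m` differentiates, outermost derivative first. -/
def multiList (α : Fin q → ℕ) (m : ℕ) : List (Option (Fin q)) :=
  (List.ofFn fun j => List.replicate (α j) (some j)).flatten ++ List.replicate m none

lemma listDer_replicate (n : ℕ) (i : Option (Fin q)) (f : APt q → ℂ) :
    listDer (List.replicate n i) f = (amder (bvec i))^[n] f := by
  induction n with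
  | zero => rfl
  | succ n ih => rw [List.replicate_succ, listDer_cons, ih, Function.iterate_succ_apply']

lemma amixed_eq_listDer (α : Fin q → ℕ) (m : ℕ) (f : APt q → ℂ) :
    amixed α m f = listDer (multiList α m) f := by
  rw [multiList, listDer_append, listDer_replicate, amixed]
  change _ = listDer _ ((amder (0, 1))^[m] f)
  generalize (amder (0, 1))^[m] f = g
  have key : ∀ l : List (Fin q),
      (l.map fun j => (amder ((Pi.single j 1 : Fin q → ℝ), 0))^[α j]).foldr (· ∘ ·) id g =
        listDer (l.map fun j => List.replicate (α j) (some j)).flatten g := fun l => by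
    induction l with
    | nil => rfl
    | cons j l ih =>
      simp only [List.map_cons, List.foldr_cons, List.flatten_cons, Function.comp_apply]
      rw [ih, listDer_append, listDer_replicate]
      rfl
  rw [List.ofFn_eq_map, List.ofFn_eq_map]
  exact key _

lemma perm_multiList (L : List (Option (Fin q))) :
    L.Perm (multiList (fun j => L.count (some j)) (L.count none)) := by
  rw [List.perm_iff_count]
  rintro (_ | j)
  · simp [multiList, List.count_flatten, List.map_ofFn, List.sum_ofFn, List.count_replicate]
  · simp [multiList, List.count_flatten, List.map_ofFn, List.sum_ofFn, List.count_replicate]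

/-! ### Differentiation under the integral sign up to the boundary -/

/-- Differentiation under the integral sign within a convex set, the derivative of the integrand
being dominated on the whole set. Unlike in the open case, the point may lie on the boundary. -/
lemma hasFDerivWithinAt_integral_of_convex {E G X : Type*} [NormedAddCommGroup E] [NormedSpace ℝ E]
    [NormedAddCommGroup G] [NormedSpace ℝ G] [CompleteSpace G] [MeasurableSpace X] {μ : Measure X}
    {s : Set E} (hs : Convex ℝ s) {x : E} (hx : x ∈ s) {F : E → X → G} {F' : E → X → E →L[ℝ] G}
    {B : X → ℝ} (hF : ∀ y ∈ s, Integrable (F y) μ) (hF' : AEStronglyMeasurable (F' x) μ)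
    (hd : ∀ a, ∀ y ∈ s, HasFDerivWithinAt (fun y => F y a) (F' y a) s y)
    (hB : ∀ a, ∀ y ∈ s, ‖F' y a‖ ≤ B a) (hBi : Integrable B μ) :
    Integrable (F' x) μ ∧
      HasFDerivWithinAt (fun y => ∫ a, F y a ∂μ) (∫ a, F' x a ∂μ) s x := by
  have hi : Integrable (F' x) μ := hBi.mono' hF' (.of_forall fun a => hB a x hx)
  refine ⟨hi, ?_⟩
  rw [hasFDerivWithinAt_iff_tendsto]
  have hint : ∀ y ∈ s, Integrable (fun a => F y a - F x a - F' x a (y - x)) μ := fun y hy =>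
    ((hF y hy).sub (hF x hx)).sub (hi.apply_continuousLinearMap _)
  have lim : Tendsto (fun y => ∫ a, ‖y - x‖⁻¹ * ‖F y a - F x a - F' x a (y - x)‖ ∂μ) (𝓝[s] x)
      (𝓝 (∫ _, (0 : ℝ) ∂μ)) := by
    refine tendsto_integral_filter_of_dominated_convergence (fun a => B a + B a) ?_ ?_
      (hBi.add hBi) (.of_forall fun a => hasFDerivWithinAt_iff_tendsto.1 (hd a x hx))
    · filter_upwards [self_mem_nhdsWithin] with y hy
      exact ((hint y hy).norm.const_mul _).aestronglyMeasurable
    · filter_upwards [self_mem_nhdsWithin] with y hy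
      refine .of_forall fun a => ?_
      have h0 : 0 ≤ B a := (norm_nonneg _).trans (hB a x hx)
      have h1 : ‖F y a - F x a‖ ≤ B a * ‖y - x‖ :=
        hs.norm_image_sub_le_of_norm_hasFDerivWithin_le (hd a) (hB a) hx hy
      have h2 : ‖F' x a (y - x)‖ ≤ B a * ‖y - x‖ := (F' x a).le_of_opNorm_le (hB a x hx) _
      have h3 : ‖F y a - F x a - F' x a (y - x)‖ ≤ (B a + B a) * ‖y - x‖ :=
        (norm_sub_le _ _).trans (by linarith)
      rw [Real.norm_of_nonneg (by positivity), inv_mul_eq_div]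
      exact div_le_of_le_mul₀ (norm_nonneg _) (by positivity) h3
  rw [integral_zero] at lim
  refine squeeze_zero' (.of_forall fun y => by positivity) ?_ lim
  filter_upwards [self_mem_nhdsWithin] with y hy
  rw [integral_const_mul]
  gcongr
  rw [← (integral_sub (hF y hy) (hF x hx)), ContinuousLinearMap.integral_apply hi,
    ← integral_sub (f := fun a => F y a - F x a) ((hF y hy).sub (hF x hx))
      (hi.apply_continuousLinearMap _)]
  exact norm_integral_le_integral_norm _

/-! ### Rapidly decreasing functions -/

/-- `f` is smooth on `ℝ^q × [0,1]`, and all its iterated partial derivatives, taken in any order,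
decay rapidly in `ξ`, uniformly in `t`. -/
def Sch (f : APt q → ℂ) : Prop :=
  ContDiffOn ℝ (⊤ : ℕ∞) f (ADom q) ∧ ∀ (k : ℕ) (L : List (Option (Fin q))), ∃ C : ℝ,
    ∀ z ∈ ADom q, (1 + ‖z.1‖ ^ 2) ^ k * ‖listDer L f z‖ ≤ C

lemma MemA.sch {f : APt q → ℂ} (hf : MemA f) : Sch f := by
  refine ⟨hf.1, fun k L => ?_⟩
  obtain ⟨C, -, hC⟩ := hf.2.2 k (L.count none) (fun j => L.count (some j))
  refine ⟨C, fun z hz => ?_⟩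
  rw [listDer_perm hf.1 (perm_multiList L) hz, ← amixed_eq_listDer]
  exact hC z hz

lemma Sch.der {f : APt q → ℂ} (hf : Sch f) (i : Option (Fin q)) : Sch (amder (bvec i) f) := by
  refine ⟨amder_contDiffOn hf.1 _, fun k L => ?_⟩
  have := hf.2 k (L ++ [i])
  rwa [listDer_append] at this

lemma sch_zero : Sch (0 : APt q → ℂ) :=
  ⟨contDiffOn_const, fun k L => ⟨0, fun z _ => by simp [listDer_zero]⟩⟩

lemma Sch.bound {f : APt q → ℂ} (hf : Sch f) (k : ℕ) :
    ∃ C : ℝ, 0 ≤ C ∧ ∀ z ∈ ADom q, (1 + ‖z.1‖ ^ 2) ^ k * ‖f z‖ ≤ C := by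
  obtain ⟨C, hC⟩ := hf.2 k []
  exact ⟨max C 0, le_max_right _ _, fun z hz => (hC z hz).trans (le_max_left _ _)⟩

/-- The coordinates on `ℝ^q × ℝ` with respect to `bvec`. -/
def bcoord : Option (Fin q) → APt q → ℝ
  | none => fun y => y.2
  | some j => fun y => y.1 j

lemma clm_eq_sum (A : APt q →L[ℝ] ℂ) (y : APt q) :
    A y = ∑ i, bcoord i y • A (bvec i) := by
  have : y = ∑ i, bcoord i y • bvec i := by
    rw [Fintype.sum_option]
    ext j
    · simp [bcoord, bvec, Prod.fst_sum, Finset.sum_apply, Pi.single_apply]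
    · simp [bcoord, bvec, Prod.snd_sum]
  conv_lhs => rw [this]
  simp

lemma norm_bcoord_le (i : Option (Fin q)) (y : APt q) : ‖bcoord i y‖ ≤ ‖y‖ := by
  cases i with
  | none => exact norm_snd_le y
  | some j => exact (norm_le_pi_norm y.1 j).trans (norm_fst_le y)

lemma clm_norm_le (A : APt q →L[ℝ] ℂ) : ‖A‖ ≤ ∑ i, ‖A (bvec i)‖ := by
  refine A.opNorm_le_bound (Finset.sum_nonneg fun _ _ => norm_nonneg _) fun y => ?_
  rw [clm_eq_sum A y, Finset.sum_mul]
  refine (norm_sum_le _ _).trans (Finset.sum_le_sum fun i _ => ?_)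
  rw [norm_smul, mul_comm]
  gcongr
  exact norm_bcoord_le i y

lemma Sch.bound_fderivWithin {f : APt q → ℂ} (hf : Sch f) (k : ℕ) : ∃ C : ℝ, 0 ≤ C ∧
    ∀ z ∈ ADom q, (1 + ‖z.1‖ ^ 2) ^ k * ‖fderivWithin ℝ f (ADom q) z‖ ≤ C := by
  choose C hC0 hC using fun i => (hf.der i).bound k
  refine ⟨∑ i, C i, Finset.sum_nonneg fun i _ => hC0 i, fun z hz => ?_⟩
  calc _ ≤ (1 + ‖z.1‖ ^ 2) ^ k * ∑ i, ‖fderivWithin ℝ f (ADom q) z (bvec i)‖ := by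
        gcongr; exact clm_norm_le _
    _ ≤ _ := by
        rw [Finset.mul_sum]
        exact Finset.sum_le_sum fun i _ => hC i z hz

/-! ### Integrability and decay of the convolution -/

lemma integrable_weight :
    Integrable (fun η : Fin q → ℝ => ((1 + ‖η‖ ^ 2) ^ (q + 1))⁻¹) := by
  have h := integrable_rpow_neg_one_add_norm_sq (E := Fin q → ℝ) (μ := volume)
    (r := 2 * ((q + 1 : ℕ) : ℝ)) (by simp; linarith [(Nat.cast_nonneg q : (0 : ℝ) ≤ q)])
  refine h.congr (.of_forall fun η => ?_)
  simp only
  rw [show -(2 * ((q + 1 : ℕ) : ℝ)) / 2 = -((q + 1 : ℕ) : ℝ) by ring,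
    Real.rpow_neg (by positivity), Real.rpow_natCast]

lemma sub_mem_ADom {z : APt q} (hz : z ∈ ADom q) (η : Fin q → ℝ) : (z.1 - η, z.2) ∈ ADom q := hz

lemma mk_mem_ADom {z : APt q} (hz : z ∈ ADom q) (η : Fin q → ℝ) : (η, z.2) ∈ ADom q := hz

lemma integrable_conv {f g : APt q → ℂ} (hf : Sch f) (hg : Sch g) {z : APt q} (hz : z ∈ ADom q) :
    Integrable (fun η : Fin q → ℝ => f (z.1 - η, z.2) * g (η, z.2)) := by
  obtain ⟨Cf, hCf0, hCf⟩ := hf.bound 0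
  obtain ⟨Cg, hCg0, hCg⟩ := hg.bound (q + 1)
  refine (integrable_weight.const_mul (Cf * Cg)).mono' ?_ (.of_forall fun η => ?_)
  · refine Continuous.aestronglyMeasurable (.mul ?_ ?_)
    · exact hf.1.continuousOn.comp_continuous (by fun_prop) (sub_mem_ADom hz)
    · exact hg.1.continuousOn.comp_continuous (by fun_prop) (mk_mem_ADom hz)
  · have h1 := hCf _ (sub_mem_ADom hz η)
    have h2 := hCg _ (mk_mem_ADom hz η)
    rw [pow_zero, one_mul] at h1
    rw [norm_mul, mul_assoc, ← div_eq_mul_inv]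
    gcongr
    rw [le_div_iff₀ (by positivity), mul_comm]
    exact h2

/-- Peetre's inequality. -/
lemma peetre (ξ η : Fin q → ℝ) :
    1 + ‖ξ‖ ^ 2 ≤ 2 * ((1 + ‖ξ - η‖ ^ 2) * (1 + ‖η‖ ^ 2)) := by
  have h : ‖ξ‖ ≤ ‖ξ - η‖ + ‖η‖ := by simpa using norm_add_le (ξ - η) η
  have h2 : ‖ξ‖ ^ 2 ≤ (‖ξ - η‖ + ‖η‖) ^ 2 := by gcongr
  nlinarith [sq_nonneg (‖ξ - η‖ - ‖η‖), mul_nonneg (sq_nonneg ‖ξ - η‖) (sq_nonneg ‖η‖)]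

lemma aconv_bound {f g : APt q → ℂ} (hf : Sch f) (hg : Sch g) (k : ℕ) :
    ∃ C : ℝ, ∀ z ∈ ADom q, (1 + ‖z.1‖ ^ 2) ^ k * ‖aconv f g z‖ ≤ C := by
  obtain ⟨Cf, hCf0, hCf⟩ := hf.bound k
  obtain ⟨Cg, hCg0, hCg⟩ := hg.bound (k + (q + 1))
  refine ⟨∫ η : Fin q → ℝ, 2 ^ k * (Cf * Cg) * ((1 + ‖η‖ ^ 2) ^ (q + 1))⁻¹, fun z hz => ?_⟩
  have hi := integrable_conv hf hg hz
  calc _ ≤ (1 + ‖z.1‖ ^ 2) ^ k * ∫ η : Fin q → ℝ, ‖f (z.1 - η, z.2) * g (η, z.2)‖ := by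
        gcongr; exact norm_integral_le_integral_norm _
    _ ≤ _ := by
      rw [← integral_const_mul]
      refine integral_mono (hi.norm.const_mul _) (integrable_weight.const_mul _) fun η => ?_
      have h1 := hCf _ (sub_mem_ADom hz η)
      have h2 := hCg _ (mk_mem_ADom hz η)
      simp only at h1 h2 ⊢
      rw [← div_eq_mul_inv, le_div_iff₀ (by positivity), norm_mul]
      calc _ ≤ (2 * ((1 + ‖z.1 - η‖ ^ 2) * (1 + ‖η‖ ^ 2))) ^ k *
            (‖f (z.1 - η, z.2)‖ * ‖g (η, z.2)‖) * (1 + ‖η‖ ^ 2) ^ (q + 1) := by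
              gcongr; exact peetre _ _
        _ = 2 ^ k * (((1 + ‖z.1 - η‖ ^ 2) ^ k * ‖f (z.1 - η, z.2)‖) *
            ((1 + ‖η‖ ^ 2) ^ (k + (q + 1)) * ‖g (η, z.2)‖)) := by
              rw [mul_pow, mul_pow, pow_add]; ring
        _ ≤ _ := by gcongr

/-! ### The Leibniz rule -/

/-- The linear part of `z ↦ (η, z.2)`. -/
def projT : APt q →L[ℝ] APt q := (0 : APt q →L[ℝ] (Fin q → ℝ)).prod (.snd ℝ _ _)

/-- The derivative in `z` of the integrand `f (z.1 - η, z.2) * g (η, z.2)`. -/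
def convDer (f g : APt q → ℂ) (z : APt q) (η : Fin q → ℝ) : APt q →L[ℝ] ℂ :=
  f (z.1 - η, z.2) • (fderivWithin ℝ g (ADom q) (η, z.2)).comp projT +
    g (η, z.2) • fderivWithin ℝ f (ADom q) (z.1 - η, z.2)

lemma hasFDerivWithinAt_conv {f g : APt q → ℂ} (hf : Sch f) (hg : Sch g) (η : Fin q → ℝ)
    {z : APt q} (hz : z ∈ ADom q) :
    HasFDerivWithinAt (fun z : APt q => f (z.1 - η, z.2) * g (η, z.2)) (convDer f g z η)
      (ADom q) z := by
  have df := ((hf.1 _ (sub_mem_ADom hz η)).differentiableWithinAt (by simp)).hasFDerivWithinAt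
  have dg := ((hg.1 _ (mk_mem_ADom hz η)).differentiableWithinAt (by simp)).hasFDerivWithinAt
  have a₁ : HasFDerivWithinAt (fun z : APt q => (z.1 - η, z.2)) (.id ℝ (APt q)) (ADom q) z := by
    have := (hasFDerivWithinAt_id (𝕜 := ℝ) z (ADom q)).sub_const (η, (0 : ℝ))
    refine HasFDerivWithinAt.congr this (fun y _ => ?_) ?_ <;> ext <;> simp
  have a₂ : HasFDerivWithinAt (fun z : APt q => (η, z.2)) projT (ADom q) z :=
    (hasFDerivWithinAt_const η z (ADom q)).prodMk hasFDerivWithinAt_snd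
  have := (df.comp z a₁ fun y hy => sub_mem_ADom hy η).mul
    (dg.comp z a₂ fun y hy => mk_mem_ADom hy η)
  rw [ContinuousLinearMap.comp_id] at this
  exact this

lemma aconv_hasFDerivWithinAt {f g : APt q → ℂ} (hf : Sch f) (hg : Sch g) {z : APt q}
    (hz : z ∈ ADom q) : Integrable (convDer f g z) ∧
      HasFDerivWithinAt (aconv f g) (∫ η, convDer f g z η) (ADom q) z := by
  obtain ⟨Cf, hCf0, hCf⟩ := hf.bound 0
  obtain ⟨Cg, hCg0, hCg⟩ := hg.bound (q + 1)
  obtain ⟨Df, hDf0, hDf⟩ := hf.bound_fderivWithin 0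
  obtain ⟨Dg, hDg0, hDg⟩ := hg.bound_fderivWithin (q + 1)
  refine hasFDerivWithinAt_integral_of_convex convex_ADom hz
    (B := fun η => (Cf * (Dg * ‖projT (q := q)‖) + Cg * Df) * ((1 + ‖η‖ ^ 2) ^ (q + 1))⁻¹)
    (fun y hy => integrable_conv hf hg hy) ?_
    (fun η y hy => hasFDerivWithinAt_conv hf hg η hy) (fun η y hy => ?_)
    (integrable_weight.const_mul _)
  · have c₁ := hf.1.continuousOn.comp_continuous (f := fun η => (z.1 - η, z.2)) (by fun_prop)
      (sub_mem_ADom hz)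
    have c₂ := hg.1.continuousOn.comp_continuous (f := fun η => (η, z.2)) (by fun_prop)
      (mk_mem_ADom hz)
    have c₃ := (hf.1.continuousOn_fderivWithin uniqueDiffOn_ADom (by simp)).comp_continuous
      (f := fun η => (z.1 - η, z.2)) (by fun_prop) (sub_mem_ADom hz)
    have c₄ := (hg.1.continuousOn_fderivWithin uniqueDiffOn_ADom (by simp)).comp_continuous
      (f := fun η => (η, z.2)) (by fun_prop) (mk_mem_ADom hz)
    exact ((c₁.smul (c₄.clm_comp continuous_const)).add (c₂.smul c₃)).aestronglyMeasurable
  · have h1 := hCf _ (sub_mem_ADom hy η)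
    have h2 := hCg _ (mk_mem_ADom hy η)
    have h3 := hDf _ (sub_mem_ADom hy η)
    have h4 := hDg _ (mk_mem_ADom hy η)
    rw [pow_zero, one_mul] at h1 h3
    have h2' : ‖g (η, y.2)‖ ≤ Cg * ((1 + ‖η‖ ^ 2) ^ (q + 1))⁻¹ := by
      rw [← div_eq_mul_inv, le_div_iff₀ (by positivity), mul_comm]; exact h2
    have h4' : ‖fderivWithin ℝ g (ADom q) (η, y.2)‖ ≤ Dg * ((1 + ‖η‖ ^ 2) ^ (q + 1))⁻¹ := by
      rw [← div_eq_mul_inv, le_div_iff₀ (by positivity), mul_comm]; exact h4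
    calc ‖convDer f g y η‖ ≤ ‖f (y.1 - η, y.2)‖ *
          (‖fderivWithin ℝ g (ADom q) (η, y.2)‖ * ‖projT (q := q)‖) +
          ‖g (η, y.2)‖ * ‖fderivWithin ℝ f (ADom q) (y.1 - η, y.2)‖ := by
            refine (norm_add_le _ _).trans ?_
            rw [norm_smul, norm_smul]
            gcongr
            exact ContinuousLinearMap.opNorm_comp_le _ _
      _ ≤ Cf * ((Dg * ((1 + ‖η‖ ^ 2) ^ (q + 1))⁻¹) * ‖projT (q := q)‖) +
          (Cg * ((1 + ‖η‖ ^ 2) ^ (q + 1))⁻¹) * Df := by gcongr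
      _ = _ := by ring

/-- The factor differentiating `g` in the Leibniz rule for `f ⋆ g`: since `f ⋆ g` depends on `g`
only through its values on the fibre over `t`, it is `∂_t g` in direction `t` and `0` in the
directions of `ξ`. -/
def rightDer : Option (Fin q) → (APt q → ℂ) → APt q → ℂ
  | none => amder (bvec none)
  | some _ => fun _ => 0

lemma Sch.rightDer {g : APt q → ℂ} (hg : Sch g) (i : Option (Fin q)) : Sch (rightDer i g) := by
  cases i with
  | none => exact hg.der none
  | some j => exact sch_zero

/-- The Leibniz rule for the fibrewise convolution. -/
lemma amder_aconv {f g : APt q → ℂ} (hf : Sch f) (hg : Sch g) (i : Option (Fin q)) :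
    EqOn (amder (bvec i) (aconv f g))
      (aconv (amder (bvec i) f) g + aconv f (rightDer i g)) (ADom q) := fun z hz => by
  obtain ⟨hi, hd⟩ := aconv_hasFDerivWithinAt hf hg hz
  rw [amder, hd.fderivWithin (uniqueDiffOn_ADom z hz), ContinuousLinearMap.integral_apply hi,
    Pi.add_apply, aconv, aconv,
    ← integral_add (integrable_conv (hf.der i) hg hz) (integrable_conv hf (hg.rightDer i) hz)]
  congr 1 with η
  cases i with
  | none => simp [convDer, projT, bvec, rightDer, amder]; ring
  | some j =>
    have h0 : (((0 : Fin q → ℝ), (0 : ℝ)) : APt q) = 0 := rfl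
    simp [convDer, projT, bvec, rightDer, amder, h0, mul_comm]

/-! ### Smoothness and decay of all derivatives -/

lemma aconv_contDiffOn_nat (n : ℕ) : ∀ {f g : APt q → ℂ}, Sch f → Sch g →
    ContDiffOn ℝ n (aconv f g) (ADom q) := by
  induction n with
  | zero =>
    intro f g hf hg
    rw [Nat.cast_zero, contDiffOn_zero]
    exact fun z hz => (aconv_hasFDerivWithinAt hf hg hz).2.continuousWithinAt
  | succ n ih =>
    intro f g hf hg
    push_cast
    rw [contDiffOn_succ_iff_fderiv_apply uniqueDiffOn_ADom]
    refine ⟨fun z hz => (aconv_hasFDerivWithinAt hf hg hz).2.differentiableWithinAt, by simp,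
      fun y => ?_⟩
    simp_rw [fun z => clm_eq_sum (fderivWithin ℝ (aconv f g) (ADom q) z) y]
    refine ContDiffOn.sum fun i _ => ContDiffOn.const_smul _ ?_
    exact ((ih (hf.der i) hg).add (ih hf (hg.rightDer i))).congr (amder_aconv hf hg i)

lemma aconv_contDiffOn {f g : APt q → ℂ} (hf : Sch f) (hg : Sch g) :
    ContDiffOn ℝ (⊤ : ℕ∞) (aconv f g) (ADom q) :=
  contDiffOn_infty.2 fun n => aconv_contDiffOn_nat n hf hg

lemma aconv_listDer_bound (k : ℕ) (L : List (Option (Fin q))) : ∀ {f g : APt q → ℂ}, Sch f →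
    Sch g → ∃ C : ℝ, ∀ z ∈ ADom q, (1 + ‖z.1‖ ^ 2) ^ k * ‖listDer L (aconv f g) z‖ ≤ C := by
  -- The innermost derivative is distributed first, since it acts on `f ⋆ g` itself.
  induction L using List.reverseRecOn with
  | nil => exact fun hf hg => aconv_bound hf hg k
  | append_singleton L i ih =>
    intro f g hf hg
    obtain ⟨C₁, h₁⟩ := ih (hf.der i) hg
    obtain ⟨C₂, h₂⟩ := ih hf (hg.rightDer i)
    refine ⟨C₁ + C₂, fun z hz => ?_⟩
    rw [listDer_append]
    change (1 + ‖z.1‖ ^ 2) ^ k * ‖listDer L (amder (bvec i) (aconv f g)) z‖ ≤ _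
    rw [listDer_congr (amder_aconv hf hg i) L hz, listDer_add (aconv_contDiffOn (hf.der i) hg)
      (aconv_contDiffOn hf (hg.rightDer i)) L hz, Pi.add_apply]
    calc _ ≤ (1 + ‖z.1‖ ^ 2) ^ k * (‖listDer L (aconv (amder (bvec i) f) g) z‖ +
          ‖listDer L (aconv f (rightDer i g)) z‖) := by gcongr; exact norm_add_le _ _
      _ ≤ _ := by rw [mul_add]; exact add_le_add (h₁ z hz) (h₂ z hz)

/-! ### Supports -/

/-- The support condition for `f ⋆ g` holds with the fibrewise sum of the compact sets of `f` and
`g`: if `f (ξ - η, t) * g (η, t) ≠ 0` then `(tξ, t) = (t(ξ - η) + tη, t)` lies in it. -/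
lemma aconv_support {f g : APt q → ℂ} (hf : MemA f) (hg : MemA g) :
    ∃ K : Set (APt q), IsCompact K ∧ (∀ z ∈ K, z.2 ∈ Icc (0 : ℝ) 1) ∧
      (∀ z ∈ K, z.2 = 0 → z.1 = 0) ∧
      ∀ (ξ : Fin q → ℝ) (t : ℝ), t ∈ Icc (0 : ℝ) 1 → t ≠ 0 → (t • ξ, t) ∉ K →
        aconv f g (ξ, t) = 0 := by
  obtain ⟨Kf, cf, If, Zf, Sf⟩ := hf.2.1
  obtain ⟨Kg, cg, -, Zg, Sg⟩ := hg.2.1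
  refine ⟨(fun p : APt q × APt q => (p.1.1 + p.2.1, p.1.2)) ''
    (Kf ×ˢ Kg ∩ {p | p.1.2 = p.2.2}), ?_, ?_, ?_, ?_⟩
  · exact ((cf.prod cg).inter_right (isClosed_eq (by fun_prop) (by fun_prop))).image (by fun_prop)
  · rintro _ ⟨p, ⟨⟨h1, h2⟩, -⟩, rfl⟩
    exact If p.1 h1
  · rintro _ ⟨p, ⟨⟨h1, h2⟩, h3⟩, rfl⟩ h0
    have h0 : p.1.2 = 0 := h0
    change p.1.1 + p.2.1 = 0
    rw [Zf _ h1 h0, Zg _ h2 (by rw [← h0]; exact h3.symm), add_zero]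
  · intro ξ t ht ht0 hK
    refine integral_eq_zero_of_ae (.of_forall fun η => ?_)
    by_cases h1 : (t • (ξ - η), t) ∈ Kf
    · have h2 : (t • η, t) ∉ Kg := fun h2 => hK
        ⟨((t • (ξ - η), t), (t • η, t)), ⟨⟨h1, h2⟩, rfl⟩, by simp [← smul_add]⟩
      simp [Sg η t ht ht0 h2]
    · simp [Sf (ξ - η) t ht ht0 h1]

/-- main Theorem of the paper for the group `𝒢 = ℝ^q`: for `f, g ∈ A_q`,
the convolution `(f ⋆ g)(ξ,t) = ∫ f(ξ−η,t)·g(η,t) dη` is well defined and belongs to `A_q`. -/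
theorem stmt4 {q : ℕ} (f g : APt q → ℂ) (hf : MemA f) (hg : MemA g) :
    (∀ z ∈ ADom q, Integrable (fun η : Fin q → ℝ => f (z.1 - η, z.2) * g (η, z.2))) ∧
    MemA (aconv f g) := by
  refine ⟨fun z hz => integrable_conv hf.sch hg.sch hz, aconv_contDiffOn hf.sch hg.sch,
    aconv_support hf hg, fun k m α => ?_⟩
  obtain ⟨C, hC⟩ := aconv_listDer_bound k (multiList α m) hf.sch hg.sch
  refine ⟨max C 1, by positivity, fun z hz => ?_⟩
  rw [amixed_eq_listDer]
  exact (hC z hz).trans (le_max_left _ _)
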